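/- Let d ≥ 2 and let F be a smooth function on the standard unit sphere 𝕊^{d−1} ⊂ ℝ^d whose zeroth and first spherical harmonic components vanish (i.e. ∫_{𝕊^{d−1}} F = 0 and ∫_{𝕊^{d−1}} F(θ) θ dθ = 0). Then 0 ≤ ‖[Δ + (d−1)]F‖² − (3d+5)⟨F, [−Δ − (d−1)]F⟩ + 2(d+1)(d+2)‖F‖², where Δ is the spherical Laplacian, ⟨·,·⟩ is the L² inner product on 𝕊^{d−1} and ‖·‖ the associated L² norm. -/

import Mathlib

open MeasureTheory Real
open scoped RealInnerProductSpace Pointwise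

noncomputable section

/-- The surface (area) measure on the unit sphere `𝕊^{d-1} ⊂ ℝ^d`. -/
def sphMeasure (d : ℕ) : Measure (Metric.sphere (0 : EuclideanSpace ℝ (Fin d)) 1) :=
  (volume : Measure (EuclideanSpace ℝ (Fin d))).toSphere

/-- The degree-zero homogeneous extension of a function on the unit sphere to `ℝ^d`
(extended by `0` at the origin). -/
def ext0 {d : ℕ} (F : Metric.sphere (0 : EuclideanSpace ℝ (Fin d)) 1 → ℝ)
    (x : EuclideanSpace ℝ (Fin d)) : ℝ :=
  letI := Classical.dec (x = 0)
  if hx : x = 0 then 0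
  else F ⟨‖x‖⁻¹ • x, by
    simp [mem_sphere_zero_iff_norm, norm_smul, abs_of_nonneg, inv_mul_cancel₀,
      norm_ne_zero_iff.mpr hx]⟩

/-- The Euclidean Laplacian of `f : ℝ^d → ℝ`. -/
def eucLap {d : ℕ} (f : EuclideanSpace ℝ (Fin d) → ℝ) (x : EuclideanSpace ℝ (Fin d)) : ℝ :=
  ∑ i, fderiv ℝ (fun y => fderiv ℝ f y (EuclideanSpace.single i 1)) x (EuclideanSpace.single i 1)

/-- The Laplace–Beltrami operator (spherical Laplacian) on the unit sphere `𝕊^{d-1}`: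
for `F : 𝕊^{d-1} → ℝ`, `sphLap F` is the restriction to the sphere of the Euclidean
Laplacian of the degree-zero homogeneous extension of `F`.  (This is the standard
characterization of the spherical Laplacian.) -/
def sphLap {d : ℕ} (F : Metric.sphere (0 : EuclideanSpace ℝ (Fin d)) 1 → ℝ) :
    Metric.sphere (0 : EuclideanSpace ℝ (Fin d)) 1 → ℝ :=
  fun θ => eucLap (ext0 F) θ.val

/-- A function on the unit sphere is smooth iff its degree-zero homogeneous extension is
smooth away from the origin. -/
def SphSmooth {d : ℕ} (F : Metric.sphere (0 : EuclideanSpace ℝ (Fin d)) 1 → ℝ) : Prop :=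
  ContDiffOn ℝ (⊤ : ℕ∞) (ext0 F) {(0 : EuclideanSpace ℝ (Fin d))}ᶜ

/-!
With `P(t) = (t - 2d)(t - 3(d + 1))` the quadratic form in question is `⟨P(-Δ)F, F⟩`. The zeros
`2d = λ₂` and `3(d + 1) = λ₃` of `P` are consecutive eigenvalues of `-Δ`, so `P(λ_n) ≥ 0` for
all `n`.

Spherical harmonics are avoided. Let `V n` be the restrictions to the sphere of the polynomials
of degree `< n`. The identity `Δ(u_j q) = u_j Δq + 2 D_j q - (d - 1) u_j q` shows, by induction on
`n`, that `-Δ` acts on `V (n + 1) / V n` as the scalar `λ_n`; hence `P(-Δ)` acts there as `P(λ_n)`.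
Since `-Δ` is symmetric, a polynomial `a ∈ V (n + 1)` splits as `q + w` with `q ∈ V n` and
`w ⟂ V n`, and `⟨P(-Δ)a, a⟩ = ⟨P(-Δ)q, q⟩ + P(λ_n)‖w‖²`. Induction gives non-negativity on
polynomials, and Stone–Weierstrass extends it to smooth functions.

Symmetry follows from `∫ D_i F = (d - 1) ∫ u_i F`, which is integration by parts in `ℝ^d` against
a radial cutoff `χ(‖x‖²)`, written in polar coordinates.
-/

section Triangular

open Polynomial

variable {R A : Type*} [CommRing R] [AddCommGroup A] [Module R A]

/-- `T` is triangular, with diagonal entries `μ 0, μ 1, …`, along the filtration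
`⊥ = V 0 ≤ V 1 ≤ V 2 ≤ …`: it acts on the quotient `V (n + 1) / V n` as the scalar `μ n`. -/
structure IsTriangularAlong (T : Module.End R A) (V : ℕ → Submodule R A) (μ : ℕ → R) : Prop where
  zero_eq_bot : V 0 = ⊥
  mono : Monotone V
  sub_smul_mem : ∀ n, ∀ a ∈ V (n + 1), T a - μ n • a ∈ V n

namespace IsTriangularAlong

variable {T : Module.End R A} {V : ℕ → Submodule R A} {μ : ℕ → R}

lemma apply_mem (h : IsTriangularAlong T V μ) {n : ℕ} {a : A} (ha : a ∈ V n) : T a ∈ V n := by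
  cases n with
  | zero =>
    rw [h.zero_eq_bot, Submodule.mem_bot] at ha ⊢
    rw [ha, map_zero]
  | succ n =>
    rw [← sub_add_cancel (T a) (μ n • a)]
    exact add_mem (h.mono n.le_succ (h.sub_smul_mem n a ha)) (Submodule.smul_mem _ _ ha)

lemma aeval (h : IsTriangularAlong T V μ) (p : R[X]) :
    IsTriangularAlong (aeval T p) V fun n ↦ p.eval (μ n) where
  zero_eq_bot := h.zero_eq_bot
  mono := h.mono
  sub_smul_mem n a ha := by
    obtain ⟨q, hq⟩ := X_sub_C_dvd_sub_C_eval (a := μ n) (p := p)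
    have hfactor : Polynomial.aeval T p a - p.eval (μ n) • a
        = Polynomial.aeval T q (T a - μ n • a) := by
      simpa [mul_comm (X - C (μ n)), Module.algebraMap_end_apply] using
        congrArg (Polynomial.aeval T · a) hq
    rw [hfactor]
    exact aeval_apply_smul_mem_of_le_comap (h.sub_smul_mem n a ha) q T
      fun v hv ↦ h.apply_mem hv

end IsTriangularAlong

end Triangular

section SymmetricForm

open Polynomial

variable {A H : Type*} [AddCommGroup A] [Module ℝ A] [NormedAddCommGroup H]
  [InnerProductSpace ℝ H] {ι : A →ₗ[ℝ] H} {T : Module.End ℝ A} {V : ℕ → Submodule ℝ A}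
  {μ : ℕ → ℝ}

lemma inner_aeval_apply_comm (hT : ∀ a b, ⟪ι (T a), ι b⟫ = ⟪ι a, ι (T b)⟫) (p : ℝ[X]) (a b : A) :
    ⟪ι (aeval T p a), ι b⟫ = ⟪ι a, ι (aeval T p b)⟫ := by
  induction p using Polynomial.induction_on generalizing b with
  | C c => simp [Module.algebraMap_end_apply, inner_smul_left, inner_smul_right]
  | add p q hp hq => simp [inner_add_left, inner_add_right, hp, hq]
  | monomial n c ih =>
    calc ⟪ι (aeval T (C c * X ^ (n + 1)) a), ι b⟫
        = ⟪ι (T (aeval T (C c * X ^ n) a)), ι b⟫ := by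
          rw [pow_succ', mul_left_comm, map_mul, aeval_X, Module.End.mul_apply]
      _ = ⟪ι a, ι (aeval T (C c * X ^ n) (T b))⟫ := by rw [hT, ih]
      _ = ⟪ι a, ι (aeval T (C c * X ^ (n + 1)) b)⟫ := by
          rw [pow_succ, ← mul_assoc, map_mul _ _ X, aeval_X, Module.End.mul_apply]

lemma exists_mem_forall_inner_sub_eq_zero (ι : A →ₗ[ℝ] H) (W : Submodule ℝ A)
    [FiniteDimensional ℝ W] (a : A) : ∃ p ∈ W, ∀ v ∈ W, ⟪ι a - ι p, ι v⟫ = 0 := by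
  obtain ⟨p, hpW, hp⟩ := Submodule.mem_map.1 ((W.map ι).starProjection_apply_mem (ι a))
  refine ⟨p, hpW, fun v hv ↦ ?_⟩
  rw [hp]
  exact Submodule.starProjection_inner_eq_zero _ _ (Submodule.mem_map_of_mem hv)

namespace IsTriangularAlong

variable [∀ n, FiniteDimensional ℝ (V n)]

lemma inner_apply_self_nonneg_of_mem (h : IsTriangularAlong T V μ)
    (hT : ∀ a b, ⟪ι (T a), ι b⟫ = ⟪ι a, ι (T b)⟫) (hμ : ∀ n, 0 ≤ μ n) {n : ℕ} :
    ∀ {a : A}, a ∈ V n → 0 ≤ ⟪ι (T a), ι a⟫ := by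
  induction n with
  | zero =>
    intro a ha
    rw [h.zero_eq_bot, Submodule.mem_bot] at ha
    simp [ha]
  | succ n ih =>
    intro a ha
    obtain ⟨q, hq, horth⟩ := exists_mem_forall_inner_sub_eq_zero ι (V n) a
    obtain ⟨w, rfl⟩ : ∃ w, a = q + w := ⟨a - q, by abel⟩
    simp only [map_add, add_sub_cancel_left] at horth
    have hw : w ∈ V (n + 1) := by simpa using sub_mem ha (h.mono n.le_succ hq)
    have hqw : ⟪ι (T q), ι w⟫ = 0 := by rw [real_inner_comm, horth _ (h.apply_mem hq)]
    have hwq : ⟪ι (T w), ι q⟫ = 0 := by rw [hT, horth _ (h.apply_mem hq)]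
    have hww : ⟪ι (T w), ι w⟫ = μ n * ⟪ι w, ι w⟫ := by
      rw [← sub_eq_zero, ← real_inner_smul_left, ← inner_sub_left, ← map_smul, ← map_sub,
        real_inner_comm, horth _ (h.sub_smul_mem n w hw)]
    calc 0 ≤ ⟪ι (T q), ι q⟫ + μ n * ⟪ι w, ι w⟫ :=
          add_nonneg (ih hq) (mul_nonneg (hμ n) real_inner_self_nonneg)
      _ = ⟪ι (T (q + w)), ι (q + w)⟫ := by
          simp only [map_add, inner_add_left, inner_add_right, hqw, hwq, hww]
          ring

theorem inner_apply_self_nonneg (h : IsTriangularAlong T V μ)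
    (hT : ∀ a b, ⟪ι (T a), ι b⟫ = ⟪ι a, ι (T b)⟫)
    (hV : ⊤ ≤ (⨆ n, (V n).map ι).topologicalClosure) (hμ : ∀ n, 0 ≤ μ n) (a : A) :
    0 ≤ ⟪ι (T a), ι a⟫ := by
  choose p hpV hp using fun n ↦ exists_mem_forall_inner_sub_eq_zero ι (V n) a
  have hmono : Monotone fun n ↦ (V n).map ι := fun m n hmn ↦ Submodule.map_mono (h.mono hmn)
  have tendsto_of_orth {b : A} {q : ℕ → A} (hqV : ∀ n, q n ∈ V n)
      (hq : ∀ n, ∀ v ∈ V n, ⟪ι b - ι (q n), ι v⟫ = 0) :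
      Filter.Tendsto (fun n ↦ ι (q n)) Filter.atTop (nhds (ι b)) := by
    refine (Submodule.starProjection_tendsto_self _ hmono (ι b) hV).congr fun n ↦ ?_
    refine Submodule.eq_starProjection_of_mem_of_inner_eq_zero
      (Submodule.mem_map_of_mem (hqV n)) ?_
    rintro _ ⟨v, hv, rfl⟩
    exact hq n v hv
  -- By symmetry `ι (T (p n))` is the orthogonal projection of `ι (T a)`, so it converges to
  -- `ι (T a)` although `T` need not be continuous.
  have hTp (n : ℕ) (v : A) (hv : v ∈ V n) : ⟪ι (T a) - ι (T (p n)), ι v⟫ = 0 := by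
    rw [← map_sub, ← map_sub, hT, map_sub, hp n _ (h.apply_mem hv)]
  have hlim := (tendsto_of_orth (fun n ↦ h.apply_mem (hpV n)) hTp).inner
    (tendsto_of_orth hpV hp) (𝕜 := ℝ)
  exact ge_of_tendsto' hlim fun n ↦ h.inner_apply_self_nonneg_of_mem hT hμ (hpV n)

end IsTriangularAlong

end SymmetricForm

section Norm

variable {E : Type*} [NormedAddCommGroup E] [InnerProductSpace ℝ E]

lemma hasFDerivAt_norm {x : E} (hx : x ≠ 0) : HasFDerivAt (‖·‖) (‖x‖⁻¹ • innerSL ℝ x) x := by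
  have h := (hasStrictFDerivAt_norm_sq x).hasFDerivAt.sqrt (by simpa using hx)
  simp only [Real.sqrt_sq (norm_nonneg _)] at h
  convert! h using 1
  ext v
  simp
  field_simp

lemma fderiv_comp_norm_sq {χ : ℝ → ℝ} (x v : E) (hχ : DifferentiableAt ℝ χ (‖x‖ ^ 2)) :
    fderiv ℝ (fun y : E ↦ χ (‖y‖ ^ 2)) x v = deriv χ (‖x‖ ^ 2) * (2 * ⟪x, v⟫) := by
  have h := hχ.hasDerivAt.comp_hasFDerivAt x (hasStrictFDerivAt_norm_sq x).hasFDerivAt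
  exact (DFunLike.congr_fun h.fderiv v).trans (by simp)

end Norm

section Polar

variable {E : Type*} [NormedAddCommGroup E] [NormedSpace ℝ E] [FiniteDimensional ℝ E]
  [MeasurableSpace E] [BorelSpace E] (μ : Measure E) [μ.IsAddHaarMeasure]

lemma integral_eq_toSphere_mul_volumeIoiPow [Nontrivial E] {h : E → ℝ}
    {f : Metric.sphere (0 : E) 1 → ℝ} {g : Set.Ioi (0 : ℝ) → ℝ}
    (hfg : ∀ θ r, h (r.1 • θ.1) = f θ * g r) :
    ∫ x, h x ∂μ
      = (∫ θ, f θ ∂μ.toSphere) * ∫ r, g r ∂(Measure.volumeIoiPow (Module.finrank ℝ E - 1)) := by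
  calc ∫ x, h x ∂μ = ∫ x : ({(0 : E)}ᶜ : Set E), h x ∂(μ.comap Subtype.val) := by
        rw [integral_subtype_comap (measurableSet_singleton _).compl, restrict_compl_singleton]
    _ = ∫ p, f p.1 * g p.2
          ∂(μ.toSphere.prod (Measure.volumeIoiPow (Module.finrank ℝ E - 1))) := by
        rw [← μ.measurePreserving_homeomorphUnitSphereProd.integral_comp
          (Homeomorph.measurableEmbedding _)]
        refine integral_congr_ae (.of_forall fun x ↦ ?_)
        have hx := hfg (homeomorphUnitSphereProd E x).1 (homeomorphUnitSphereProd E x).2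
        rwa [homeomorphUnitSphereProd_apply_fst_coe, homeomorphUnitSphereProd_apply_snd_coe,
          smul_inv_smul₀ (norm_ne_zero_iff.2 x.2)] at hx
    _ = _ := integral_prod_mul f g

end Polar

section Cutoff

variable {E : Type*} [NormedAddCommGroup E] [MeasurableSpace E] [BorelSpace E] {μ : Measure E}
  {f φ : E → ℝ}

lemma integrable_mul_of_hasCompactSupport [IsFiniteMeasureOnCompacts μ] (hφ : Continuous φ)
    (hφc : HasCompactSupport φ) (hf : ∀ x ∈ tsupport φ, ContinuousAt f x) :
    Integrable (fun x ↦ f x * φ x) μ := by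
  refine Continuous.integrable_of_hasCompactSupport ?_ hφc.mul_left
  exact continuous_of_tsupport fun x hx ↦
    (hf x (tsupport_mul_subset_right hx)).mul hφ.continuousAt

lemma integral_fderiv_mul_eq_neg_integral_mul_fderiv [NormedSpace ℝ E] [FiniteDimensional ℝ E]
    [μ.IsAddHaarMeasure] (hφ : ContDiff ℝ 1 φ) (hφc : HasCompactSupport φ)
    (hf : ∀ x ∈ tsupport φ, ContDiffAt ℝ 1 f x) (v : E) :
    ∫ x, fderiv ℝ f x v * φ x ∂μ = -∫ x, f x * fderiv ℝ φ x v ∂μ := by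
  rw [integral_mul_fderiv_eq_neg_fderiv_mul_of_integrable, neg_neg]
  · exact integrable_mul_of_hasCompactSupport hφ.continuous hφc fun x hx ↦
      ((hf x hx).continuousAt_fderiv one_ne_zero).clm_apply continuousAt_const
  · exact integrable_mul_of_hasCompactSupport
      ((hφ.continuous_fderiv one_ne_zero).clm_apply continuous_const) (hφc.fderiv_apply ℝ v)
      fun x hx ↦ (hf x (tsupport_fderiv_apply_subset ℝ v hx)).continuousAt
  · exact integrable_mul_of_hasCompactSupport hφ.continuous hφc fun x hx ↦ (hf x hx).continuousAt
  · exact fun x hx ↦ (hf x hx).differentiableAt one_ne_zero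
  · exact fun x _ ↦ hφ.differentiable one_ne_zero x

end Cutoff

section SmoothFunctions

variable {d : ℕ}

local notation "𝕊" d:max => Metric.sphere (0 : EuclideanSpace ℝ (Fin d)) 1

lemma exists_pos_smul_coe_sphere_eq {x : EuclideanSpace ℝ (Fin d)} (hx : x ≠ 0) :
    ∃ r : ℝ, 0 < r ∧ ∃ θ : 𝕊 d, r • θ.1 = x :=
  ⟨‖x‖, norm_pos_iff.2 hx, ⟨‖x‖⁻¹ • x, by simp [norm_smul, hx]⟩,
    smul_inv_smul₀ (norm_ne_zero_iff.2 hx) x⟩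

section Extension

variable (F G : 𝕊 d → ℝ)

lemma ext0_zero : ext0 F 0 = 0 := by simp [ext0]

lemma ext0_smul_coe {r : ℝ} (hr : 0 < r) (θ : 𝕊 d) : ext0 F (r • θ.1) = F θ := by
  have hne : r • θ.1 ≠ 0 := smul_ne_zero hr.ne' (ne_zero_of_mem_unit_sphere θ)
  rw [ext0, dif_neg hne]
  congr
  simp [norm_smul, abs_of_pos hr, hr.ne']

lemma ext0_coe (θ : 𝕊 d) : ext0 F θ = F θ := by
  simpa using ext0_smul_coe F one_pos θ

lemma ext0_smul_of_pos {r : ℝ} (hr : 0 < r) (x : EuclideanSpace ℝ (Fin d)) :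
    ext0 F (r • x) = ext0 F x := by
  obtain rfl | hx := eq_or_ne x 0
  · simp
  · obtain ⟨s, hs, θ, rfl⟩ := exists_pos_smul_coe_sphere_eq hx
    rw [smul_smul, ext0_smul_coe F (mul_pos hr hs), ext0_smul_coe F hs]

lemma ext0_add : ext0 (F + G) = ext0 F + ext0 G := by
  ext x
  by_cases hx : x = 0 <;> simp [ext0, hx]

lemma ext0_mul : ext0 (F * G) = ext0 F * ext0 G := by
  ext x
  by_cases hx : x = 0 <;> simp [ext0, hx]

lemma ext0_const_smul (c : ℝ) : ext0 (c • F) = c • ext0 F := by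
  ext x
  by_cases hx : x = 0 <;> simp [ext0, hx]

lemma fderiv_ext0_smul_of_pos {r : ℝ} (hr : 0 < r) (x : EuclideanSpace ℝ (Fin d)) :
    fderiv ℝ (ext0 F) (r • x) = r⁻¹ • fderiv ℝ (ext0 F) x := by
  rw [eq_inv_smul_iff₀ hr.ne', ← fderiv_comp_smul]
  simp only [ext0_smul_of_pos F hr]

variable {F G}

lemma fderiv_ext0_apply_self {x : EuclideanSpace ℝ (Fin d)} (hF : DifferentiableAt ℝ (ext0 F) x) :
    fderiv ℝ (ext0 F) x x = 0 := by
  have hray : HasDerivAt (fun t : ℝ ↦ ext0 F (t • x)) (fderiv ℝ (ext0 F) x x) 1 := by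
    have h := (hasDerivAt_id (1 : ℝ)).smul_const x
    rw [one_smul] at h
    exact HasFDerivAt.comp_hasDerivAt 1 (by simpa using hF.hasFDerivAt) h
  have hconst : (fun t : ℝ ↦ ext0 F (t • x)) =ᶠ[nhds 1] fun _ ↦ ext0 F x := by
    filter_upwards [lt_mem_nhds (zero_lt_one' ℝ)] with t ht using ext0_smul_of_pos F ht x
  exact hray.unique ((hasDerivAt_const (1 : ℝ) _).congr_of_eventuallyEq hconst)

namespace SphSmooth

lemma of_contDiffOn {g : EuclideanSpace ℝ (Fin d) → ℝ} (hg : ContDiffOn ℝ (⊤ : ℕ∞) g {0}ᶜ) :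
    SphSmooth fun θ : 𝕊 d ↦ g θ := by
  have hproj : ContDiffOn ℝ (⊤ : ℕ∞) (fun x : EuclideanSpace ℝ (Fin d) ↦ ‖x‖⁻¹ • x) {0}ᶜ :=
    fun x hx ↦ (((contDiffAt_norm ℝ hx).inv (norm_ne_zero_iff.2 hx)).smul
      contDiffAt_id).contDiffWithinAt
  refine (hg.comp hproj fun x hx ↦ by simpa using hx).congr fun x hx ↦ ?_
  obtain ⟨r, hr, θ, rfl⟩ := exists_pos_smul_coe_sphere_eq hx
  rw [ext0_smul_coe _ hr]
  simp [norm_smul, abs_of_pos hr, hr.ne']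

lemma add (hF : SphSmooth F) (hG : SphSmooth G) : SphSmooth (F + G) := by
  rw [SphSmooth, ext0_add]
  exact ContDiffOn.add hF hG

lemma mul (hF : SphSmooth F) (hG : SphSmooth G) : SphSmooth (F * G) := by
  rw [SphSmooth, ext0_mul]
  exact ContDiffOn.mul hF hG

lemma contDiffAt (hF : SphSmooth F) {x : EuclideanSpace ℝ (Fin d)} (hx : x ≠ 0) :
    ContDiffAt ℝ (⊤ : ℕ∞) (ext0 F) x :=
  ContDiffOn.contDiffAt hF (isOpen_compl_singleton.mem_nhds hx)

lemma contDiffOn_fderiv_apply (hF : SphSmooth F) (v : EuclideanSpace ℝ (Fin d)) :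
    ContDiffOn ℝ (⊤ : ℕ∞) (fun x ↦ fderiv ℝ (ext0 F) x v) {0}ᶜ :=
  (ContDiffOn.fderiv_of_isOpen hF isOpen_compl_singleton (by simp)).clm_apply contDiffOn_const

lemma differentiableAt (hF : SphSmooth F) (θ : 𝕊 d) : DifferentiableAt ℝ (ext0 F) θ :=
  (hF.contDiffAt (ne_zero_of_mem_unit_sphere θ)).differentiableAt (by simp)

protected lemma continuous (hF : SphSmooth F) : Continuous F := by
  rw [← funext (ext0_coe F), continuous_iff_continuousAt]
  exact fun θ ↦ (hF.differentiableAt θ).continuousAt.comp continuousAt_subtype_val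

end SphSmooth

end Extension

variable (d) in
/-- The algebra `C^∞(𝕊^{d-1})` of smooth functions on the unit sphere. -/
def smoothSph : Subalgebra ℝ (𝕊 d → ℝ) where
  carrier := {F | SphSmooth F}
  mul_mem' hF hG := SphSmooth.mul hF hG
  add_mem' hF hG := SphSmooth.add hF hG
  algebraMap_mem' _ := SphSmooth.of_contDiffOn contDiffOn_const

/-- The coordinate function `u_i : θ ↦ θ_i` on the sphere. -/
def coord (i : Fin d) : smoothSph d :=
  ⟨fun θ ↦ θ.1 i,
    SphSmooth.of_contDiffOn (EuclideanSpace.proj (𝕜 := ℝ) i).contDiff.contDiffOn⟩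

lemma sum_coord_sq : ∑ i : Fin d, coord i ^ 2 = 1 := by
  ext θ
  have hθ := EuclideanSpace.real_norm_sq_eq θ.1
  simpa [coord] using hθ.symm

/-- The component `D_i` of the tangential gradient on the sphere: the `i`-th partial derivative,
on the sphere, of the degree-zero homogeneous extension. -/
def tangentialDeriv (i : Fin d) : Derivation ℝ (smoothSph d) (smoothSph d) :=
  Derivation.mk'
    { toFun F := ⟨fun θ ↦ fderiv ℝ (ext0 F.1) θ (EuclideanSpace.single i 1),
        SphSmooth.of_contDiffOn (F.2.contDiffOn_fderiv_apply _)⟩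
      map_add' F G := by
        ext θ
        simp [ext0_add, fderiv_add (F.2.differentiableAt θ) (G.2.differentiableAt θ)]
      map_smul' c F := by
        ext θ
        simp [ext0_const_smul, fderiv_const_smul (F.2.differentiableAt θ)] }
    fun F G ↦ by
      ext θ
      simp [ext0_mul, fderiv_mul (F.2.differentiableAt θ) (G.2.differentiableAt θ), ext0_coe]

lemma tangentialDeriv_apply (i : Fin d) (F : smoothSph d) (θ : 𝕊 d) :
    (tangentialDeriv i F).1 θ = fderiv ℝ (ext0 F.1) θ (EuclideanSpace.single i 1) := rfl

lemma ext0_tangentialDeriv (i : Fin d) (F : smoothSph d) :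
    ext0 (tangentialDeriv i F).1
      = fun x ↦ ‖x‖ * fderiv ℝ (ext0 F.1) x (EuclideanSpace.single i 1) := by
  ext x
  obtain rfl | hx := eq_or_ne x 0
  · simp [ext0_zero]
  · obtain ⟨r, hr, θ, rfl⟩ := exists_pos_smul_coe_sphere_eq hx
    simp [ext0_smul_coe _ hr, fderiv_ext0_smul_of_pos _ hr, tangentialDeriv_apply, norm_smul,
      abs_of_pos hr, hr.ne']

lemma sum_coord_mul_tangentialDeriv (F : smoothSph d) :
    ∑ i, coord i * tangentialDeriv i F = 0 := by
  ext θ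
  have hsum : ∑ i, θ.1 i • EuclideanSpace.single i (1 : ℝ) = θ.1 := by
    simpa using (EuclideanSpace.basisFun (Fin d) ℝ).sum_repr θ.1
  have hEuler := fderiv_ext0_apply_self (F.2.differentiableAt θ)
  conv_lhs at hEuler => enter [2]; rw [← hsum]
  simpa [coord, tangentialDeriv_apply, map_sum] using hEuler

lemma fderiv_norm_mul_single {g : EuclideanSpace ℝ (Fin d) → ℝ} (θ : 𝕊 d)
    (hg : DifferentiableAt ℝ g θ) (i : Fin d) :
    fderiv ℝ (fun x ↦ ‖x‖ * g x) θ (EuclideanSpace.single i 1)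
      = fderiv ℝ g θ (EuclideanSpace.single i 1) + θ.1 i * g θ := by
  have h := (hasFDerivAt_norm (ne_zero_of_mem_unit_sphere θ)).mul hg.hasFDerivAt
  refine (DFunLike.congr_fun h.fderiv _).trans ?_
  simp [EuclideanSpace.inner_single_right, mul_comm]

lemma tangentialDeriv_coord (i j : Fin d) :
    tangentialDeriv i (coord j) = (if i = j then 1 else 0) - coord i * coord j := by
  ext θ
  have hext : (fun x ↦ ‖x‖ * ext0 (coord j).1 x) = fun x : EuclideanSpace ℝ (Fin d) ↦ x j := by
    ext x
    obtain rfl | hx := eq_or_ne x 0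
    · simp
    · obtain ⟨r, hr, θ, rfl⟩ := exists_pos_smul_coe_sphere_eq hx
      simp [ext0_smul_coe _ hr, coord, norm_smul, abs_of_pos hr]
  have h := fderiv_norm_mul_single θ ((coord j).2.differentiableAt θ) i
  have hproj : fderiv ℝ (fun x : EuclideanSpace ℝ (Fin d) ↦ x j) θ = EuclideanSpace.proj j :=
    (EuclideanSpace.proj j : EuclideanSpace ℝ (Fin d) →L[ℝ] ℝ).fderiv
  rw [hext, hproj, ext0_coe, ← tangentialDeriv_apply, ← sub_eq_iff_eq_add] at h
  rw [← h]
  split_ifs with hij <;> simp [coord, hij, Ne.symm]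

variable (d) in
/-- The Laplace–Beltrami operator on `C^∞(𝕊^{d-1})`, as the sum of squares of the tangential
derivatives; `sphLap_eq_sphLaplacian` identifies it with `sphLap`. -/
def sphLaplacian : Module.End ℝ (smoothSph d) :=
  ∑ i, (tangentialDeriv i).toLinearMap ∘ₗ (tangentialDeriv i).toLinearMap

lemma sphLaplacian_apply (F : smoothSph d) :
    sphLaplacian d F = ∑ i, tangentialDeriv i (tangentialDeriv i F) := by
  simp [sphLaplacian]

lemma sphLap_eq_sphLaplacian (F : smoothSph d) : sphLap F.1 = (sphLaplacian d F).1 := by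
  ext θ
  have hsecond (i : Fin d) := fderiv_norm_mul_single θ
    (((F.2.contDiffOn_fderiv_apply (EuclideanSpace.single i 1)).contDiffAt
      (isOpen_compl_singleton.mem_nhds (ne_zero_of_mem_unit_sphere θ))).differentiableAt
      (by simp)) i
  have hEuler := congrArg (fun G ↦ G.1 θ) (sum_coord_mul_tangentialDeriv F)
  simp only [← ext0_tangentialDeriv, ← tangentialDeriv_apply] at hsecond
  simp_all [sphLaplacian_apply, sphLap, eucLap, Finset.sum_add_distrib, coord]

lemma sphLaplacian_mul (F G : smoothSph d) :
    sphLaplacian d (F * G) = F * sphLaplacian d G + G * sphLaplacian d F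
      + 2 * ∑ i, tangentialDeriv i F * tangentialDeriv i G := by
  simp only [sphLaplacian_apply, Derivation.leibniz, map_add, smul_eq_mul, Finset.mul_sum,
    ← Finset.sum_add_distrib]
  exact Finset.sum_congr rfl fun i _ ↦ by ring

lemma sum_tangentialDeriv_coord_mul (j : Fin d) (F : smoothSph d) :
    ∑ i, tangentialDeriv i (coord j) * tangentialDeriv i F = tangentialDeriv j F := by
  simp_rw [tangentialDeriv_coord, sub_mul, ite_mul, mul_right_comm _ (coord j),
    Finset.sum_sub_distrib, ← Finset.sum_mul, sum_coord_mul_tangentialDeriv]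
  simp

lemma sphLaplacian_coord (j : Fin d) : sphLaplacian d (coord j) = -((d : ℝ) - 1) • coord j := by
  have hterm (i : Fin d) : tangentialDeriv i (tangentialDeriv i (coord j))
      = -(coord i * tangentialDeriv i (coord j)) - (1 - coord i ^ 2) * coord j := by
    conv_lhs => rw [tangentialDeriv_coord i j, map_sub, Derivation.leibniz, smul_eq_mul,
      smul_eq_mul, tangentialDeriv_coord i i, if_pos rfl, apply_ite (tangentialDeriv i),
      Derivation.map_one_eq_zero, map_zero, ite_self]
    ring
  simp_rw [sphLaplacian_apply, hterm, Finset.sum_sub_distrib, Finset.sum_neg_distrib,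
    sum_coord_mul_tangentialDeriv, ← Finset.sum_mul, Finset.sum_sub_distrib, sum_coord_sq]
  simp [← Nat.cast_smul_eq_nsmul ℝ, sub_smul, sub_mul]

lemma sphLaplacian_coord_mul (j : Fin d) (F : smoothSph d) :
    sphLaplacian d (coord j * F) = coord j * sphLaplacian d F + (2 : ℝ) • tangentialDeriv j F
      - ((d : ℝ) - 1) • (coord j * F) := by
  rw [sphLaplacian_mul, sphLaplacian_coord, sum_tangentialDeriv_coord_mul, mul_smul_comm,
    mul_comm F, two_smul, two_mul, neg_smul]
  abel

section Polynomials

variable (d) in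
/-- The restrictions to the sphere of the polynomials of degree less than `n`. The shift by one
makes the filtration start with `polyLT d 0 = ⊥`. -/
def polyLT : ℕ → Submodule ℝ (smoothSph d)
  | 0 => ⊥
  | n + 1 => (1 ⊔ Submodule.span ℝ (Set.range coord)) ^ n

lemma polyLT_zero : polyLT d 0 = ⊥ := rfl

lemma polyLT_one : polyLT d 1 = 1 := pow_zero _

lemma polyLT_succ_succ (n : ℕ) : polyLT d (n + 2)
    = polyLT d (n + 1) ⊔ Submodule.span ℝ (Set.range coord) * polyLT d (n + 1) := by
  rw [polyLT, pow_succ', Submodule.sup_mul, one_mul, polyLT]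

lemma polyLT_mono : Monotone (polyLT d) :=
  monotone_nat_of_le_succ fun
    | 0 => bot_le
    | n + 1 => polyLT_succ_succ (d := d) n ▸ le_sup_left

instance finiteDimensional_polyLT : ∀ n, FiniteDimensional ℝ (polyLT d n)
  | 0 => inferInstanceAs (FiniteDimensional ℝ (⊥ : Submodule ℝ (smoothSph d)))
  | n + 1 => by
    refine Module.Finite.iff_fg.2 (Submodule.FG.pow (Submodule.FG.sup ?_ ?_) n)
    · exact Submodule.one_eq_span (R := ℝ) (A := smoothSph d) ▸ Submodule.fg_span_singleton 1
    · exact Submodule.fg_span (Set.finite_range _)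

lemma coord_mul_mem_polyLT (i : Fin d) {n : ℕ} {q : smoothSph d} (hq : q ∈ polyLT d n) :
    coord i * q ∈ polyLT d (n + 1) := by
  cases n with
  | zero =>
    rw [polyLT_zero, Submodule.mem_bot] at hq
    rw [hq, mul_zero]
    exact zero_mem _
  | succ n =>
    rw [polyLT_succ_succ]
    exact Submodule.mem_sup_right
      (Submodule.mul_mem_mul (Submodule.subset_span (Set.mem_range_self i)) hq)

lemma polyLT_succ_succ_le {n : ℕ} {P : Submodule ℝ (smoothSph d)} (hle : polyLT d (n + 1) ≤ P)
    (hmul : ∀ j, ∀ q ∈ polyLT d (n + 1), coord j * q ∈ P) : polyLT d (n + 2) ≤ P := by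
  rw [polyLT_succ_succ]
  refine sup_le hle (Submodule.mul_le.2 fun m hm q hq ↦ ?_)
  have hspan : Submodule.span ℝ (Set.range coord) ≤ P.comap (LinearMap.mulRight ℝ q) := by
    rw [Submodule.span_le]
    rintro _ ⟨j, rfl⟩
    exact hmul j q hq
  exact hspan hm

lemma adjoin_coord_le_iSup_polyLT :
    Subalgebra.toSubmodule (Algebra.adjoin ℝ (Set.range coord)) ≤ ⨆ n, polyLT d n := by
  rw [Algebra.adjoin_eq_span, Submodule.span_le]
  intro q hq
  simp only [SetLike.mem_coe, Submodule.mem_iSup_of_directed _ polyLT_mono.directed_le] at hq ⊢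
  induction hq using Submonoid.closure_induction_left with
  | one => exact ⟨1, polyLT_one (d := d) ▸ Submodule.one_le.1 le_rfl⟩
  | mul_left x hx q _ hq =>
    obtain ⟨i, rfl⟩ := hx
    obtain ⟨n, hn⟩ := hq
    exact ⟨n + 1, coord_mul_mem_polyLT i hn⟩

lemma tangentialDeriv_add_smul_coord_mul_mem_polyLT (i : Fin d) (n : ℕ) :
    ∀ q ∈ polyLT d (n + 1), tangentialDeriv i q + (n : ℝ) • (coord i * q) ∈ polyLT d (n + 1) := by
  induction n with
  | zero =>
    intro q hq
    obtain ⟨c, rfl⟩ := Submodule.mem_one.1 (polyLT_one (d := d) ▸ hq)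
    simp
  | succ n ih =>
    refine polyLT_succ_succ_le (P := (polyLT d (n + 2)).comap
      ((tangentialDeriv i).toLinearMap + ((n + 1 : ℕ) : ℝ) • LinearMap.mulLeft ℝ (coord i))) ?_ ?_
    · intro q hq
      have hsplit : tangentialDeriv i q + ((n + 1 : ℕ) : ℝ) • (coord i * q)
          = (tangentialDeriv i q + (n : ℝ) • (coord i * q)) + coord i * q := by
        push_cast
        module
      have hmem := add_mem (polyLT_mono n.succ.le_succ (ih q hq)) (coord_mul_mem_polyLT i hq)
      rw [← hsplit] at hmem
      exact hmem
    · intro j q hq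
      have hsplit : tangentialDeriv i (coord j * q) + ((n + 1 : ℕ) : ℝ) • (coord i * (coord j * q))
          = coord j * (tangentialDeriv i q + (n : ℝ) • (coord i * q)) + if i = j then q else 0 := by
        rw [Derivation.leibniz, tangentialDeriv_coord, smul_eq_mul, smul_eq_mul, mul_sub,
          mul_ite, mul_one, mul_zero, mul_add, mul_smul_comm, mul_left_comm (coord j)]
        push_cast
        rw [add_smul, one_smul]
        ring
      have hdelta : (if i = j then q else 0) ∈ polyLT d (n + 2) := by
        split_ifs
        · exact polyLT_mono n.succ.le_succ hq
        · exact zero_mem _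
      have hmem := add_mem (coord_mul_mem_polyLT j (ih q hq)) hdelta
      rw [← hsplit] at hmem
      exact hmem

variable (d) in
/-- The `n`-th eigenvalue `λ_n = n (n + d - 2)` of `-Δ` on `𝕊^{d-1}`. -/
def sphEigenvalue (n : ℕ) : ℝ := n * (n + d - 2)

lemma sphLaplacian_add_smul_mem_polyLT (n : ℕ) :
    ∀ q ∈ polyLT d (n + 1), sphLaplacian d q + sphEigenvalue d n • q ∈ polyLT d n := by
  induction n with
  | zero =>
    intro q hq
    obtain ⟨c, rfl⟩ := Submodule.mem_one.1 (polyLT_one (d := d) ▸ hq)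
    simp [sphLaplacian_apply, sphEigenvalue]
  | succ n ih =>
    refine polyLT_succ_succ_le (P := (polyLT d (n + 1)).comap
      (sphLaplacian d + sphEigenvalue d (n + 1) • LinearMap.id)) ?_ ?_
    · intro q hq
      have hsplit : sphLaplacian d q + sphEigenvalue d (n + 1) • q
          = (sphLaplacian d q + sphEigenvalue d n • q)
            + (sphEigenvalue d (n + 1) - sphEigenvalue d n) • q := by module
      have hmem := add_mem (polyLT_mono n.le_succ (ih q hq))
        (Submodule.smul_mem _ (sphEigenvalue d (n + 1) - sphEigenvalue d n) hq)
      rw [← hsplit] at hmem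
      exact hmem
    · intro j q hq
      have hsplit : sphLaplacian d (coord j * q) + sphEigenvalue d (n + 1) • (coord j * q)
          = coord j * (sphLaplacian d q + sphEigenvalue d n • q)
            + (2 : ℝ) • (tangentialDeriv j q + (n : ℝ) • (coord j * q)) := by
        have hgap : sphEigenvalue d (n + 1) = sphEigenvalue d n + 2 * n + (d - 1) := by
          simp only [sphEigenvalue]
          push_cast
          ring
        rw [sphLaplacian_coord_mul, hgap, mul_add, mul_smul_comm]
        module
      have hmem := add_mem (coord_mul_mem_polyLT j (ih q hq))
        (Submodule.smul_mem _ (2 : ℝ) (tangentialDeriv_add_smul_coord_mul_mem_polyLT j n q hq))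
      rw [← hsplit] at hmem
      exact hmem

lemma isTriangularAlong_neg_sphLaplacian :
    IsTriangularAlong (-sphLaplacian d) (polyLT d) (sphEigenvalue d) where
  zero_eq_bot := polyLT_zero
  mono := polyLT_mono
  sub_smul_mem n q hq := by
    rw [LinearMap.neg_apply, ← neg_add']
    exact neg_mem (sphLaplacian_add_smul_mem_polyLT n q hq)

end Polynomials

section Integral

instance : IsFiniteMeasure (sphMeasure d) :=
  inferInstanceAs (IsFiniteMeasure (volume : Measure (EuclideanSpace ℝ (Fin d))).toSphere)

variable (d) in
/-- Integration over the sphere, as a linear functional on `C^∞(𝕊^{d-1})`. -/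
def sphIntegral : smoothSph d →ₗ[ℝ] ℝ where
  toFun F := ∫ θ, F.1 θ ∂sphMeasure d
  map_add' F G :=
    integral_add (F.2.continuous.integrable_of_hasCompactSupport (.of_compactSpace _))
      (G.2.continuous.integrable_of_hasCompactSupport (.of_compactSpace _))
  map_smul' c F := integral_const_mul c F.1

namespace smoothSph

variable (d) in
/-- The inclusion of `C^∞(𝕊^{d-1})` into the algebra of continuous functions. -/
def toContinuousMap : smoothSph d →ₐ[ℝ] C(𝕊 d, ℝ) where
  toFun F := ⟨F.1, F.2.continuous⟩
  map_one' := rfl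
  map_mul' _ _ := rfl
  map_zero' := rfl
  map_add' _ _ := rfl
  commutes' _ := rfl

variable (d) in
/-- The map from `C^∞(𝕊^{d-1})` to `L²(𝕊^{d-1})`. -/
def toL2 : smoothSph d →ₗ[ℝ] Lp ℝ 2 (sphMeasure d) :=
  (ContinuousMap.toLp 2 (sphMeasure d) ℝ).toLinearMap ∘ₗ (toContinuousMap d).toLinearMap

lemma inner_toL2 (F G : smoothSph d) : ⟪toL2 d F, toL2 d G⟫ = sphIntegral d (F * G) := by
  refine (ContinuousMap.inner_toLp (𝕜 := ℝ) (sphMeasure d) (toContinuousMap d F)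
    (toContinuousMap d G)).trans (integral_congr_ae (.of_forall fun θ ↦ ?_))
  exact mul_comm (G.1 θ) (F.1 θ)

end smoothSph

open smoothSph

lemma separatesPoints_map_adjoin_coord :
    ((Algebra.adjoin ℝ (Set.range (coord (d := d)))).map (toContinuousMap d)).SeparatesPoints := by
  intro θ η hne
  obtain ⟨i, hi⟩ : ∃ i, θ.1 i ≠ η.1 i := by
    by_contra! h
    exact hne (Subtype.ext (PiLp.ext h))
  exact ⟨_, ⟨_, ⟨coord i, Algebra.subset_adjoin ⟨i, rfl⟩, rfl⟩, rfl⟩, hi⟩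

lemma dense_iSup_map_toL2_polyLT :
    ⊤ ≤ (⨆ n, (polyLT d n).map (toL2 d)).topologicalClosure := by
  have hC : (Subalgebra.toSubmodule
      ((Algebra.adjoin ℝ (Set.range coord)).map (toContinuousMap d))).topologicalClosure = ⊤ := by
    ext f
    exact SetLike.ext_iff.1 (ContinuousMap.subalgebra_topologicalClosure_eq_top_of_separatesPoints
      _ separatesPoints_map_adjoin_coord) f
  have hL2 := (ContinuousMap.toLp_denseRange ℝ (sphMeasure d) ℝ
    (p := 2) (by simp)).topologicalClosure_map_submodule hC
  rw [← hL2, ← Submodule.map_iSup]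
  refine Submodule.topologicalClosure_mono ?_
  rintro _ ⟨_, ⟨q, hq, rfl⟩, rfl⟩
  exact ⟨q, adjoin_coord_le_iSup_polyLT hq, rfl⟩

lemma integral_eq_sphIntegral_mul_volumeIoiPow [Nonempty (Fin d)] {h : EuclideanSpace ℝ (Fin d) → ℝ}
    {F : smoothSph d} {g : Set.Ioi (0 : ℝ) → ℝ} (hfg : ∀ θ r, h (r.1 • θ.1) = F.1 θ * g r) :
    ∫ x, h x = sphIntegral d F * ∫ r, g r ∂Measure.volumeIoiPow (d - 1) := by
  have hpolar := integral_eq_toSphere_mul_volumeIoiPow volume hfg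
  rw [finrank_euclideanSpace_fin] at hpolar
  exact hpolar

lemma exists_contDiff_hasCompactSupport_pos : ∃ χ : ℝ → ℝ, ContDiff ℝ 1 χ ∧ HasCompactSupport χ ∧
    0 ∉ tsupport χ ∧ (∀ t, 0 ≤ χ t) ∧ χ 1 ≠ 0 := by
  let χ : ContDiffBump (1 : ℝ) := ⟨1 / 4, 1 / 2, by norm_num, by norm_num⟩
  refine ⟨χ, χ.contDiff, χ.hasCompactSupport, ?_, fun t ↦ χ.nonneg, ?_⟩
  · rw [χ.tsupport_eq]
    norm_num [χ]
  · rw [χ.one_of_mem_closedBall (Metric.mem_closedBall_self χ.rIn_pos.le)]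
    exact one_ne_zero

section Divergence

variable {χ : ℝ → ℝ} (hχ : ContDiff ℝ 1 χ) (hχc : HasCompactSupport χ) (h0 : 0 ∉ tsupport χ)

include hχc in
lemma hasCompactSupport_comp_norm_sq :
    HasCompactSupport fun x : EuclideanSpace ℝ (Fin d) ↦ χ (‖x‖ ^ 2) := by
  rw [hasCompactSupport_iff_eventuallyEq, Filter.coclosedCompact_eq_cocompact] at hχc ⊢
  exact hχc.comp_tendsto <| (((Filter.tendsto_pow_atTop two_ne_zero).comp
    tendsto_norm_cocompact_atTop).mono_right atTop_le_cocompact)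

include h0 in
lemma ne_zero_of_mem_tsupport_comp_norm_sq {x : EuclideanSpace ℝ (Fin d)}
    (hx : x ∈ tsupport fun x : EuclideanSpace ℝ (Fin d) ↦ χ (‖x‖ ^ 2)) : x ≠ 0 := by
  rintro rfl
  have h := tsupport_comp_subset_preimage χ (by fun_prop) hx
  simp [h0] at h

include hχ hχc h0 in
lemma sphIntegral_tangentialDeriv_mul_radial (i : Fin d) (F : smoothSph d) :
    sphIntegral d (tangentialDeriv i F)
        * ∫ r, χ (r.1 ^ 2) * r.1⁻¹ ∂Measure.volumeIoiPow (d - 1)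
      = -(sphIntegral d (coord i * F)
        * ∫ r, deriv χ (r.1 ^ 2) * (2 * r.1) ∂Measure.volumeIoiPow (d - 1)) := by
  have : Nonempty (Fin d) := ⟨i⟩
  let φ (x : EuclideanSpace ℝ (Fin d)) : ℝ := χ (‖x‖ ^ 2)
  have hparts : ∫ x, fderiv ℝ (ext0 F.1) x (EuclideanSpace.single i 1) * φ x
      = -∫ x, ext0 F.1 x * fderiv ℝ φ x (EuclideanSpace.single i 1) :=
    integral_fderiv_mul_eq_neg_integral_mul_fderiv (hχ.comp (contDiff_norm_sq ℝ))
      (hasCompactSupport_comp_norm_sq hχc)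
      (fun x hx ↦ (F.2.contDiffAt (ne_zero_of_mem_tsupport_comp_norm_sq h0 hx)).of_le (by simp)) _
  have hleft (θ : 𝕊 d) (r : Set.Ioi (0 : ℝ)) :
      fderiv ℝ (ext0 F.1) (r.1 • θ.1) (EuclideanSpace.single i 1) * φ (r.1 • θ.1)
        = (tangentialDeriv i F).1 θ * (χ (r.1 ^ 2) * r.1⁻¹) := by
    simp only [fderiv_ext0_smul_of_pos _ r.2, tangentialDeriv_apply, φ, norm_smul, smul_eq_mul,
      FunLike.coe_smul, Pi.smul_apply, Real.norm_of_nonneg r.2.le, norm_eq_of_mem_sphere, mul_one]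
    ring
  have hright (θ : 𝕊 d) (r : Set.Ioi (0 : ℝ)) :
      ext0 F.1 (r.1 • θ.1) * fderiv ℝ φ (r.1 • θ.1) (EuclideanSpace.single i 1)
        = (coord i * F).1 θ * (deriv χ (r.1 ^ 2) * (2 * r.1)) := by
    rw [ext0_smul_coe _ r.2, fderiv_comp_norm_sq _ _ (hχ.differentiable one_ne_zero _)]
    simp [coord, norm_smul, EuclideanSpace.inner_single_right]
    ring
  rwa [integral_eq_sphIntegral_mul_volumeIoiPow hleft,
    integral_eq_sphIntegral_mul_volumeIoiPow hright] at hparts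

include hχ hχc h0 in
lemma sphIntegral_one_mul_radial_ne_zero [Nonempty (Fin d)] (hχ0 : ∀ t, 0 ≤ χ t) (hχ1 : χ 1 ≠ 0) :
    sphIntegral d 1 * ∫ r, χ (r.1 ^ 2) * r.1⁻¹ ∂Measure.volumeIoiPow (d - 1) ≠ 0 := by
  let g (x : EuclideanSpace ℝ (Fin d)) : ℝ := χ (‖x‖ ^ 2) * ‖x‖⁻¹
  have hpolar (θ : 𝕊 d) (r : Set.Ioi (0 : ℝ)) :
      g (r.1 • θ.1) = (1 : smoothSph d).1 θ * (χ (r.1 ^ 2) * r.1⁻¹) := by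
    simp [g, norm_smul, abs_of_pos r.2.out]
  have hcont : Continuous g := by
    refine continuous_of_tsupport fun x hx ↦ ?_
    have hx0 := ne_zero_of_mem_tsupport_comp_norm_sq h0 (tsupport_mul_subset_left hx)
    exact (hχ.continuous.comp (by fun_prop)).continuousAt.mul
      (continuous_norm.continuousAt.inv₀ (norm_ne_zero_iff.2 hx0))
  rw [← integral_eq_sphIntegral_mul_volumeIoiPow hpolar]
  obtain ⟨θ⟩ : Nonempty (𝕊 d) := (NormedSpace.sphere_nonempty.2 zero_le_one).to_subtype
  exact (hcont.integral_pos_of_hasCompactSupport_nonneg_nonzero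
    (hasCompactSupport_comp_norm_sq hχc).mul_right
    (fun x ↦ mul_nonneg (hχ0 _) (by positivity)) (x := θ.1) (by simpa [g] using hχ1)).ne'

end Divergence

lemma sum_tangentialDeriv_coord :
    ∑ i : Fin d, tangentialDeriv i (coord i) = ((d : ℝ) - 1) • 1 := by
  simp [tangentialDeriv_coord, ← sq, Finset.sum_sub_distrib, sum_coord_sq,
    Algebra.smul_def]

theorem sphIntegral_tangentialDeriv (i : Fin d) (F : smoothSph d) :
    sphIntegral d (tangentialDeriv i F) = (d - 1) * sphIntegral d (coord i * F) := by
  have : Nonempty (Fin d) := ⟨i⟩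
  obtain ⟨χ, hχ, hχc, h0, hχ0, hχ1⟩ := exists_contDiff_hasCompactSupport_pos
  have hflux := sphIntegral_tangentialDeriv_mul_radial (d := d) hχ hχc h0
  have hne := sphIntegral_one_mul_radial_ne_zero (d := d) hχ hχc h0 hχ0 hχ1
  set c := ∫ r, χ (r.1 ^ 2) * r.1⁻¹ ∂Measure.volumeIoiPow (d - 1)
  set c' := ∫ r, deriv χ (r.1 ^ 2) * (2 * r.1) ∂Measure.volumeIoiPow (d - 1)
  -- The ratio `c' / c` is found by summing `hflux` over the coordinate functions `F = u_j`.
  have htotal : (d - 1) * sphIntegral d 1 * c = -(sphIntegral d 1 * c') := by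
    calc (d - 1) * sphIntegral d 1 * c
        = ∑ j, sphIntegral d (tangentialDeriv j (coord j)) * c := by
          rw [← Finset.sum_mul, ← map_sum, sum_tangentialDeriv_coord, map_smul, smul_eq_mul]
      _ = -(sphIntegral d (∑ j, coord j ^ 2) * c') := by
          simp only [hflux, ← sq, map_sum, Finset.sum_mul, Finset.sum_neg_distrib]
      _ = _ := by rw [sum_coord_sq]
  have hc' : c' = -((d - 1) * c) :=
    mul_left_cancel₀ (left_ne_zero_of_mul hne) (by linear_combination htotal)
  refine mul_right_cancel₀ (right_ne_zero_of_mul hne) ?_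
  rw [hflux, hc']
  ring

lemma sphIntegral_sphLaplacian_mul (F G : smoothSph d) : sphIntegral d (sphLaplacian d F * G)
    = -∑ i, sphIntegral d (tangentialDeriv i F * tangentialDeriv i G) := by
  have hproduct : sphLaplacian d F * G = ∑ i, tangentialDeriv i (tangentialDeriv i F * G)
      - ∑ i, tangentialDeriv i F * tangentialDeriv i G := by
    rw [sphLaplacian_apply, Finset.sum_mul, ← Finset.sum_sub_distrib]
    refine Finset.sum_congr rfl fun i _ ↦ ?_
    rw [Derivation.leibniz, smul_eq_mul, smul_eq_mul]
    ring
  have hnormal : ∑ i, coord i * (tangentialDeriv i F * G) = 0 := by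
    simp only [← mul_assoc, ← Finset.sum_mul, sum_coord_mul_tangentialDeriv, zero_mul]
  rw [hproduct, map_sub, map_sum, map_sum]
  simp only [sphIntegral_tangentialDeriv]
  rw [← Finset.mul_sum, ← map_sum, hnormal, map_zero, mul_zero, zero_sub]

lemma inner_toL2_sphLaplacian_comm (F G : smoothSph d) :
    ⟪toL2 d (sphLaplacian d F), toL2 d G⟫ = ⟪toL2 d F, toL2 d (sphLaplacian d G)⟫ := by
  rw [inner_toL2, inner_toL2, mul_comm F, sphIntegral_sphLaplacian_mul,
    sphIntegral_sphLaplacian_mul]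
  simp only [mul_comm]

end Integral

section SpectralPositivity

open Polynomial smoothSph

theorem inner_toL2_aeval_neg_sphLaplacian_self_nonneg {p : ℝ[X]}
    (hp : ∀ n, 0 ≤ p.eval (sphEigenvalue d n)) (F : smoothSph d) :
    0 ≤ ⟪toL2 d (aeval (-sphLaplacian d) p F), toL2 d F⟫ := by
  have hsymm (F G : smoothSph d) :
      ⟪toL2 d ((-sphLaplacian d) F), toL2 d G⟫ = ⟪toL2 d F, toL2 d ((-sphLaplacian d) G)⟫ := by
    simp [inner_toL2_sphLaplacian_comm]
  exact (isTriangularAlong_neg_sphLaplacian.aeval p).inner_apply_self_nonneg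
    (inner_aeval_apply_comm hsymm p) dense_iSup_map_toL2_polyLT hp F

variable (d) in
lemma sphEigenvalue_sub_mul_sub_nonneg (n : ℕ) :
    0 ≤ (sphEigenvalue d n - 2 * d) * (sphEigenvalue d n - 3 * (d + 1)) := by
  have hfactor : (sphEigenvalue d n - 2 * d) * (sphEigenvalue d n - 3 * (d + 1))
      = ((n : ℝ) - 2) * (n - 3) * ((n + d) * (n + d + 1)) := by
    rw [sphEigenvalue]
    ring
  have hconsecutive : 0 ≤ ((n : ℝ) - 2) * (n - 3) := by
    obtain hn | hn := le_or_gt n 2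
    · have hn' : (n : ℝ) ≤ 2 := by exact_mod_cast hn
      exact mul_nonneg_of_nonpos_of_nonpos (by linarith) (by linarith)
    · have hn' : (3 : ℝ) ≤ n := by exact_mod_cast hn
      exact mul_nonneg (by linarith) (by linarith)
  rw [hfactor]
  positivity

lemma inner_toL2_aeval_neg_sphLaplacian_eq (F : smoothSph d) :
    ⟪toL2 d (aeval (-sphLaplacian d) ((X - C (2 * d : ℝ)) * (X - C (3 * (d + 1) : ℝ))) F),
        toL2 d F⟫
      = sphIntegral d ((sphLaplacian d F + ((d : ℝ) - 1) • F) ^ 2)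
        - (3 * d + 5) * sphIntegral d (F * (-sphLaplacian d F - ((d : ℝ) - 1) • F))
        + 2 * (d + 1) * (d + 2) * sphIntegral d (F * F) := by
  have hsymm : sphIntegral d (sphLaplacian d (sphLaplacian d F) * F)
      = sphIntegral d (sphLaplacian d F * sphLaplacian d F) := by
    simpa only [inner_toL2] using inner_toL2_sphLaplacian_comm (sphLaplacian d F) F
  have haeval : aeval (-sphLaplacian d) ((X - C (2 * d : ℝ)) * (X - C (3 * (d + 1) : ℝ))) F
      = sphLaplacian d (sphLaplacian d F) + (5 * d + 3 : ℝ) • sphLaplacian d F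
        + (6 * d * (d + 1) : ℝ) • F := by
    simp only [map_mul, map_sub, aeval_X, aeval_C, Module.End.mul_apply, LinearMap.sub_apply,
      LinearMap.neg_apply, Module.algebraMap_end_apply, map_neg, map_smul]
    module
  have hcross : F * (-sphLaplacian d F - ((d : ℝ) - 1) • F)
      = (-1 : ℝ) • (sphLaplacian d F * F) - ((d : ℝ) - 1) • (F * F) := by
    simp only [Algebra.smul_def, map_neg, map_one]
    ring
  rw [inner_toL2, haeval, hcross]
  simp only [sq, add_mul, mul_add, smul_mul_assoc, mul_smul_comm, map_add, map_sub, map_smul,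
    smul_eq_mul, hsymm, mul_comm F (sphLaplacian d F)]
  ring

theorem sphere_poincare_lambda23_general {F : 𝕊 d → ℝ} (hF : SphSmooth F) :
    0 ≤ (∫ θ, (sphLap F θ + ((d : ℝ) - 1) * F θ) ^ 2 ∂(sphMeasure d))
        - (3 * (d : ℝ) + 5) *
          (∫ θ, F θ * (-sphLap F θ - ((d : ℝ) - 1) * F θ) ∂(sphMeasure d))
        + 2 * ((d : ℝ) + 1) * ((d : ℝ) + 2) * (∫ θ, F θ * F θ ∂(sphMeasure d)) := by
  lift F to smoothSph d using hF
  have hnonneg := inner_toL2_aeval_neg_sphLaplacian_self_nonneg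
    (p := (X - C (2 * d : ℝ)) * (X - C (3 * (d + 1) : ℝ)))
    (fun n ↦ by simpa only [eval_mul, eval_sub, eval_X, eval_C] using
      sphEigenvalue_sub_mul_sub_nonneg d n) F
  rw [inner_toL2_aeval_neg_sphLaplacian_eq] at hnonneg
  rw [sphLap_eq_sphLaplacian]
  exact hnonneg

end SpectralPositivity

end SmoothFunctions

/-- If `d ≥ 2` and `F` is a smooth function on `𝕊^{d-1}` whose zeroth and
first spherical harmonic components vanish (i.e. `∫ F = 0` and `∫ F(θ) θ dθ = 0`), then
`0 ≤ ‖[Δ + (d−1)]F‖² − (3d+5)⟨F, [−Δ − (d−1)]F⟩ + 2(d+1)(d+2)‖F‖²`. -/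
theorem sphere_poincare_lambda23 (d : ℕ) (hd : 2 ≤ d)
    (F : Metric.sphere (0 : EuclideanSpace ℝ (Fin d)) 1 → ℝ)
    (hF : SphSmooth F)
    (hmean : (∫ θ, F θ ∂(sphMeasure d)) = 0)
    (hfirst : (∫ θ, F θ • (θ : EuclideanSpace ℝ (Fin d)) ∂(sphMeasure d)) = 0) :
    0 ≤ (∫ θ, (sphLap F θ + ((d : ℝ) - 1) * F θ) ^ 2 ∂(sphMeasure d))
        - (3 * (d : ℝ) + 5) *
          (∫ θ, F θ * (-sphLap F θ - ((d : ℝ) - 1) * F θ) ∂(sphMeasure d))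
        + 2 * ((d : ℝ) + 1) * ((d : ℝ) + 2) * (∫ θ, F θ * F θ ∂(sphMeasure d)) :=
  sphere_poincare_lambda23_general hF
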